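/- arXiv:1305.5669 — 2 statements merged into one kernel-verified Lean document; each statement's English description precedes it below -/
import Mathlib

section
/- Let a, b be real numbers with a > −1/2 and b > −1, and let n, m be natural numbers. Assume 2(a+b) + j ≠ 0 for every odd integer j with 1 ≤ |j| ≤ 2·max(n,m) + 1. Then, with the generalized ultraspherical initial vector (p,q,r,s) = (−1, 1, −2a−2b−2, 2a), ∫_{−1}^{1} |x|^{2a} (1−x²)^{b} · S̄_n(−1,1,−2a−2b−2,2a;x) · S̄_m(−1,1,−2a−2b−2,2a;x) dx = δ_{n,m} · (−1)^n · (∏_{i=1}^{n} [ −(i + (1−(−1)^i)a)(i + (1−(−1)^i)a + 2b) / ((2i + 2a + 2b − 1)(2i + 2a + 2b + 1)) ]) · Γ(a + 1/2)Γ(b + 1)/Γ(a + b + 3/2), where δ_{n,m} is 1 if n = m and 0 otherwise. -/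
open Finset Real MeasureTheory

/-- The basic class of symmetric orthogonal polynomials `S_n(p,q,r,s;x)`. -/
noncomputable def S (p q r s : ℝ) (n : ℕ) (x : ℝ) : ℝ :=
  ∑ k ∈ Finset.range (n / 2 + 1),
    (Nat.choose (n / 2) k : ℝ) *
      (∏ i ∈ Finset.range (n / 2 - k),
        ((2 * (i : ℝ) + (-1 : ℝ) ^ (n + 1) + 2 * ((n / 2 : ℕ) : ℝ)) * p + r) /
        ((2 * (i : ℝ) + (-1 : ℝ) ^ (n + 1) + 2) * q + s)) *
      x ^ (n - 2 * k)

/-- The monic normalization `S̄_n(p,q,r,s;x)`. -/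
noncomputable def Sbar (p q r s : ℝ) (n : ℕ) (x : ℝ) : ℝ :=
  (∏ i ∈ Finset.range (n / 2),
    ((2 * (i : ℝ) + (-1 : ℝ) ^ (n + 1) + 2) * q + s) /
    ((2 * (i : ℝ) + (-1 : ℝ) ^ (n + 1) + 2 * ((n / 2 : ℕ) : ℝ)) * p + r)) *
    S p q r s n x

/-!
The polynomials `S̄_n` satisfy `S̄_{n+2} = x S̄_{n+1} + γ_n S̄_n` for explicit `γ_n`. Let `L` be the
functional whose odd moments vanish and whose even moments have the ratios
`L(x^(2k+2)) / L(x^(2k)) = -((2k+1)q + s) / ((2k+1)p + r)`. These ratios turn `L(S̄_{2N})` into an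
`N`-th finite difference of a polynomial of degree at most `N - 1`, so `L(S̄_n) = 0` for `n ≥ 1`.
Together with the recurrence this gives the orthogonality of the `S̄_n` under `L` and
`L(S̄_n²) = (-1)^n γ_0 ⋯ γ_{n-1} L(1)`. Finally, the even moments of `|x|^(2a) (1 - x²)^b` are the
Beta values `B(a + k + 1/2, b + 1)`, whose ratios are the required ones.
-/

open Polynomial

section ThreeTermRecurrence

variable {R A M : Type*} [CommRing R] [CommRing A] [Algebra R A] [AddCommGroup M] [Module R M]
  {x : A} {γ : ℕ → R} {P : ℕ → A} {L : A →ₗ[R] M}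

/-- A symmetric monic three-term recurrence in the variable `x`: the recurrence satisfied by the
monic orthogonal polynomials of an even weight. The signs are such that `γ n` is minus the quotient
of consecutive squared norms. -/
structure IsSymmThreeTerm (x : A) (γ : ℕ → R) (P : ℕ → A) : Prop where
  zero : P 0 = 1
  one : P 1 = x
  add_two (n : ℕ) : P (n + 2) = x * P (n + 1) + γ n • P n

namespace IsSymmThreeTerm

lemma mul_succ (hP : IsSymmThreeTerm x γ P) (n : ℕ) :
    x * P (n + 1) = P (n + 2) - γ n • P n := by
  rw [hP.add_two, add_sub_cancel_right]

lemma map_mul_eq_zero_of_lt (hP : IsSymmThreeTerm x γ P) (hL : ∀ n, L (P (n + 1)) = 0)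
    {m n : ℕ} (hmn : m < n) : L (P m * P n) = 0 := by
  obtain ⟨n, rfl⟩ := Nat.exists_eq_add_one_of_ne_zero (Nat.ne_zero_of_lt hmn)
  induction m using Nat.twoStepInduction generalizing n with
  | zero => rw [hP.zero, one_mul, hL]
  | one =>
    obtain ⟨k, rfl⟩ := Nat.exists_eq_add_one_of_ne_zero (show n ≠ 0 by lia)
    rw [hP.one, hP.mul_succ, map_sub, map_smul, hL, hL, smul_zero, sub_zero]
  | more m ih₀ ih₁ =>
    obtain ⟨k, rfl⟩ := Nat.exists_eq_add_one_of_ne_zero (show n ≠ 0 by lia)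
    have shift : P (m + 2) * P (k + 1 + 1) =
        P (m + 1) * P (k + 1 + 1 + 1) - γ (k + 1) • (P (m + 1) * P (k + 1)) +
          γ m • (P m * P (k + 1 + 1)) := by
      rw [hP.add_two m, add_mul, mul_right_comm, hP.mul_succ (k + 1), sub_mul, smul_mul_assoc,
        smul_mul_assoc, mul_comm (P (m + 1)), mul_comm (P (m + 1))]
    simp only [shift, map_add, map_sub, map_smul, ih₁ _ (show m + 1 < k + 1 + 1 + 1 by lia),
      ih₁ _ (show m + 1 < k + 1 by lia), ih₀ _ (show m < k + 1 + 1 by lia), smul_zero, sub_zero,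
      add_zero]

lemma map_mul_self_succ (hP : IsSymmThreeTerm x γ P) (hL : ∀ n, L (P (n + 1)) = 0) (n : ℕ) :
    L (P (n + 1) * P (n + 1)) = -γ n • L (P n * P n) := by
  have raise : L (x * P n * P (n + 1)) = -γ n • L (P n * P n) := by
    rw [mul_right_comm, hP.mul_succ, sub_mul, smul_mul_assoc, map_sub, map_smul,
      mul_comm (P (n + 2)), hP.map_mul_eq_zero_of_lt hL (show n < n + 2 by lia), zero_sub, neg_smul]
  rcases n with _ | n
  · simpa only [hP.zero, mul_one, hP.one] using raise
  · rw [← raise]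
    nth_rw 1 [hP.add_two n]
    rw [add_mul, smul_mul_assoc, map_add, map_smul,
      hP.map_mul_eq_zero_of_lt hL (show n < n + 1 + 1 by lia), smul_zero, add_zero]

lemma map_mul_self (hP : IsSymmThreeTerm x γ P) (hL : ∀ n, L (P (n + 1)) = 0) (n : ℕ) :
    L (P n * P n) = ((-1) ^ n * ∏ i ∈ range n, γ i) • L 1 := by
  induction n with
  | zero => simp [hP.zero]
  | succ n ih =>
    rw [hP.map_mul_self_succ hL, ih, smul_smul, prod_range_succ]
    congr 1
    ring

theorem map_mul_eq_ite (hP : IsSymmThreeTerm x γ P) (hL : ∀ n, L (P (n + 1)) = 0) (n m : ℕ) :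
    L (P n * P m) = if n = m then ((-1) ^ n * ∏ i ∈ range n, γ i) • L 1 else 0 := by
  rcases lt_trichotomy n m with h | rfl | h
  · rw [if_neg h.ne, hP.map_mul_eq_zero_of_lt hL h]
  · rw [if_pos rfl, hP.map_mul_self hL]
  · rw [if_neg h.ne', mul_comm, hP.map_mul_eq_zero_of_lt hL h]

end IsSymmThreeTerm

end ThreeTermRecurrence

section StepProd

variable {R : Type*} [CommRing R]

/-- The product `(t u + v) ((t - 2) u + v) ⋯ ((t - 2 (k - 1)) u + v)`, through which the
coefficients of `Sbar` are expressed for both parities of the degree. -/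
def stepProd (u v t : R) (k : ℕ) : R := ∏ i ∈ range k, ((t - 2 * i) * u + v)

@[simp]
lemma stepProd_zero (u v t : R) : stepProd u v t 0 = 1 := prod_range_zero _

lemma stepProd_succ (u v t : R) (k : ℕ) :
    stepProd u v t (k + 1) = stepProd u v t k * ((t - 2 * k) * u + v) :=
  prod_range_succ _ _

lemma stepProd_add (u v t : R) (j k : ℕ) :
    stepProd u v t (j + k) = stepProd u v t j * stepProd u v (t - 2 * j) k := by
  simp only [stepProd, prod_range_add, Nat.cast_add, mul_add, sub_sub]

lemma stepProd_succ' (u v t : R) (k : ℕ) :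
    stepProd u v t (k + 1) = (t * u + v) * stepProd u v (t - 2) k := by
  rw [add_comm, stepProd_add]
  simp [stepProd]

lemma stepProd_mul_comm (u v t : R) (j k : ℕ) :
    stepProd u v t j * stepProd u v (t - 2 * j) k =
      stepProd u v t k * stepProd u v (t - 2 * k) j := by
  rw [← stepProd_add, ← stepProd_add, add_comm]

lemma stepProd_ne_zero [IsDomain R] {u v : R} (h : ∀ i : ℕ, (2 * (i : R) - 1) * u + v ≠ 0)
    {n k : ℕ} (hk : k ≤ n + 1) : stepProd u v (2 * n - 1) k ≠ 0 := by
  refine prod_ne_zero_iff.mpr fun i hi => ?_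
  have hin : i ≤ n := by have := mem_range.mp hi; lia
  convert h (n - i) using 3
  rw [Nat.cast_sub hin]
  ring

lemma sum_neg_one_pow_mul_choose_mul_eval (Q : R[X]) {n : ℕ} (hQ : Q.natDegree < n) :
    ∑ k ∈ range (n + 1), (-1) ^ k * (n.choose k : R) * Q.eval (k : R) = 0 := by
  have hdiff := congrFun (fwdDiff_iter_eq_zero_of_degree_lt hQ) 0
  rw [fwdDiff_iter_eq_sum_shift, Pi.zero_apply] at hdiff
  rw [← mul_zero ((-1 : R) ^ n), ← hdiff, mul_sum]
  refine sum_congr rfl fun k hk => ?_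
  obtain ⟨j, rfl⟩ := Nat.exists_eq_add_of_le (mem_range_succ_iff.mp hk)
  have hsign : (-1 : R) ^ (k + j) * (-1) ^ j = (-1) ^ k := by
    rw [pow_add, mul_assoc, ← mul_pow, neg_one_mul, neg_neg, one_pow, mul_one]
  simp [← hsign, mul_assoc]

lemma sum_neg_one_pow_mul_choose_mul_stepProd (u v t : R) (n : ℕ) :
    ∑ k ∈ range (n + 2), (-1) ^ k * ((n + 1).choose k : R) * stepProd u v (t - 2 * k) n = 0 := by
  let Q : R[X] := ∏ i ∈ range n, (C (-2 * u) * X + C ((t - 2 * i) * u + v))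
  have hQ : Q.natDegree < n + 1 := by
    calc
      Q.natDegree ≤ ∑ i ∈ range n, (C (-2 * u) * X + C ((t - 2 * i) * u + v)).natDegree :=
        natDegree_prod_le _ _
      _ ≤ ∑ _i ∈ range n, 1 := by gcongr; exact natDegree_linear_le
      _ < n + 1 := by simp
  rw [← sum_neg_one_pow_mul_choose_mul_eval Q hQ]
  refine sum_congr rfl fun k _ => ?_
  simp only [Q, stepProd, eval_prod, eval_add, eval_mul, eval_C, eval_X]
  congr 1
  exact prod_congr rfl fun i _ => by ring

end StepProd

section SbarPoly

variable {p q r s : ℝ}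

lemma two_mul_div_two_add_neg_one_pow (n : ℕ) :
    2 * ((n / 2 : ℕ) : ℝ) + (2 * ((n / 2 : ℕ) : ℝ) + (-1) ^ (n + 1)) = 2 * n - 1 := by
  rcases n.even_or_odd' with ⟨N, rfl | rfl⟩
  · rw [show 2 * N / 2 = N by lia, (even_two_mul N).add_one.neg_one_pow]
    push_cast
    ring
  · rw [show (2 * N + 1) / 2 = N by lia, (odd_two_mul_add_one N).add_one.neg_one_pow]
    push_cast
    ring

/-- The numerator of the coefficient of `X ^ (n - 2 * k)` in `sbarPoly p q r s n`. Here
`2 * (n / 2) + (-1) ^ (n + 1)` is the largest odd number not exceeding `n` (and `-1` if `n = 0`). -/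
noncomputable def sbarCoeffNum (q s : ℝ) (n k : ℕ) : ℝ :=
  (n / 2).choose k * stepProd q s (2 * (n / 2 : ℕ) + (-1) ^ (n + 1)) k

/-- The coefficient of `X ^ (n - 2 * k)` in `sbarPoly p q r s n`. -/
noncomputable def sbarCoeff (p q r s : ℝ) (n k : ℕ) : ℝ :=
  sbarCoeffNum q s n k / stepProd p r (2 * n - 3) k

/-- The polynomial whose evaluation is `Sbar p q r s n`, with the quotients of products in the
definition of `Sbar` cancelled. -/
noncomputable def sbarPoly (p q r s : ℝ) (n : ℕ) : ℝ[X] :=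
  ∑ k ∈ range (n / 2 + 1), C (sbarCoeff p q r s n k) * X ^ (n - 2 * k)

/-- The numerator of `recurrenceCoeff p q r s n`. -/
noncomputable def recurrenceNum (p q r s : ℝ) (n : ℕ) : ℝ :=
  if Even n then ((n + 1) * q + s) * ((n - 1) * p + r)
  else (n + 1) * ((n - 1) * p * q + q * r - p * s)

/-- The coefficient `γ` in `S̄_{n+2} = x S̄_{n+1} + γ S̄_n`. -/
noncomputable def recurrenceCoeff (p q r s : ℝ) (n : ℕ) : ℝ :=
  recurrenceNum p q r s n / (((2 * n + 1) * p + r) * ((2 * n - 1) * p + r))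

lemma sbarCoeffNum_even (q s : ℝ) (N k : ℕ) :
    sbarCoeffNum q s (2 * N) k = N.choose k * stepProd q s (2 * N - 1) k := by
  rw [sbarCoeffNum, show 2 * N / 2 = N by lia, (even_two_mul N).add_one.neg_one_pow,
    ← sub_eq_add_neg]

lemma sbarCoeffNum_odd (q s : ℝ) (N k : ℕ) :
    sbarCoeffNum q s (2 * N + 1) k = N.choose k * stepProd q s (2 * N + 1) k := by
  rw [sbarCoeffNum, show (2 * N + 1) / 2 = N by lia, (odd_two_mul_add_one N).add_one.neg_one_pow]

lemma cast_choose_succ_mul (R : Type*) [Ring R] (n k : ℕ) :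
    (n.choose (k + 1) : R) * (k + 1) = n.choose k * (n - k) := by
  rcases le_or_gt k n with hk | hk
  · rw [← Nat.cast_sub hk]
    exact_mod_cast congrArg (Nat.cast (R := R)) (n.choose_succ_right_eq k)
  · simp [Nat.choose_eq_zero_of_lt hk, Nat.choose_eq_zero_of_lt (hk.trans k.lt_succ_self)]

lemma sbarCoeffNum_add_two_succ (p q r s : ℝ) (n k : ℕ) :
    sbarCoeffNum q s (n + 2) (k + 1) * ((2 * n - 1 - 2 * k) * p + r) =
      sbarCoeffNum q s (n + 1) (k + 1) * ((2 * n + 1) * p + r) +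
        recurrenceNum p q r s n * sbarCoeffNum q s n k := by
  rcases n.even_or_odd' with ⟨N, rfl | rfl⟩
  · have hchoose := cast_choose_succ_mul ℝ N k
    rw [show 2 * N + 2 = 2 * (N + 1) by ring, sbarCoeffNum_even, sbarCoeffNum_odd,
      sbarCoeffNum_even, recurrenceNum, if_pos (even_two_mul N), Nat.cast_succ,
      show 2 * ((N : ℝ) + 1) - 1 = 2 * N + 1 by ring, stepProd_succ',
      show 2 * (N : ℝ) + 1 - 2 = 2 * N - 1 by ring, Nat.choose_succ_succ]
    push_cast
    linear_combination (-2 * p * ((2 * N + 1) * q + s) * stepProd q s (2 * N - 1) k) * hchoose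
  · have hchoose : ((N + 1).choose (k + 1) : ℝ) * (k + 1) = (N + 1) * N.choose k := by
      exact_mod_cast (N.add_one_mul_choose_eq k).symm
    rw [show 2 * N + 1 + 2 = 2 * (N + 1) + 1 by ring, show 2 * N + 1 + 1 = 2 * (N + 1) by ring,
      sbarCoeffNum_odd, sbarCoeffNum_even, sbarCoeffNum_odd, recurrenceNum,
      if_neg (Nat.not_even_two_mul_add_one N), stepProd_succ', stepProd_succ]
    push_cast
    rw [show 2 * ((N : ℝ) + 1) + 1 - 2 = 2 * N + 1 by ring,
      show 2 * ((N : ℝ) + 1) - 1 = 2 * N + 1 by ring]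
    linear_combination
      (2 * (2 * N * p * q + q * r - p * s) * stepProd q s (2 * N + 1) k) * hchoose

lemma sbarCoeff_zero (p q r s : ℝ) (n : ℕ) : sbarCoeff p q r s n 0 = 1 := by
  simp [sbarCoeff, sbarCoeffNum]

lemma sbarCoeff_eq_zero (p q r s : ℝ) {n k : ℕ} (hk : n / 2 < k) : sbarCoeff p q r s n k = 0 := by
  simp [sbarCoeff, sbarCoeffNum, Nat.choose_eq_zero_of_lt hk]

lemma sbarCoeff_add_two_succ (hpr : ∀ i : ℕ, (2 * (i : ℝ) - 1) * p + r ≠ 0) {n k : ℕ}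
    (hk : k ≤ n / 2) :
    sbarCoeff p q r s (n + 2) (k + 1) =
      sbarCoeff p q r s (n + 1) (k + 1) + recurrenceCoeff p q r s n * sbarCoeff p q r s n k := by
  have htop : (2 * (n : ℝ) + 1) * p + r ≠ 0 := by
    convert hpr (n + 1) using 3
    push_cast
    ring
  have hprod := stepProd_ne_zero hpr (show k + 1 ≤ n + 1 by lia)
  rw [stepProd_succ] at hprod
  have hmid := left_ne_zero_of_mul hprod
  have hlow := (stepProd_succ p r (2 * (n : ℝ) - 1) k).symm.trans (stepProd_succ' ..)
  rw [show 2 * (n : ℝ) - 1 - 2 = 2 * n - 3 by ring] at hlow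
  simp only [sbarCoeff, recurrenceCoeff]
  push_cast
  rw [show 2 * ((n : ℝ) + 2) - 3 = 2 * n + 1 by ring,
    show 2 * ((n : ℝ) + 1) - 3 = 2 * n - 1 by ring, stepProd_succ', stepProd_succ,
    show 2 * (n : ℝ) + 1 - 2 = 2 * n - 1 by ring, div_mul_div_comm, mul_assoc, ← hlow,
    div_add_div _ _ hprod (mul_ne_zero htop hprod),
    div_eq_div_iff (mul_ne_zero htop hmid) (mul_ne_zero hprod (mul_ne_zero htop hprod))]
  linear_combination (((2 * n + 1) * p + r) * stepProd p r (2 * n - 1) k ^ 2 *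
    ((2 * n - 1 - 2 * k) * p + r)) * sbarCoeffNum_add_two_succ p q r s n k

lemma X_mul_sbarPoly_succ (p q r s : ℝ) (n : ℕ) :
    X * sbarPoly p q r s (n + 1) =
      ∑ k ∈ range (n / 2 + 2), C (sbarCoeff p q r s (n + 1) k) * X ^ (n + 2 - 2 * k) := by
  have hsub : range ((n + 1) / 2 + 1) ⊆ range (n / 2 + 2) := range_mono (by lia)
  rw [sbarPoly, mul_sum]
  refine (sum_congr rfl fun k hk => ?_).trans (sum_subset hsub fun k _ hk => ?_)
  · have hkn : 2 * k ≤ n + 1 := by have := mem_range.mp hk; lia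
    rw [show n + 2 - 2 * k = n + 1 - 2 * k + 1 by lia, pow_succ]
    ring
  · rw [sbarCoeff_eq_zero _ _ _ _ (by simpa using hk), C_0, zero_mul]

theorem isSymmThreeTerm_sbarPoly (hpr : ∀ i : ℕ, (2 * (i : ℝ) - 1) * p + r ≠ 0) :
    IsSymmThreeTerm X (recurrenceCoeff p q r s) (sbarPoly p q r s) where
  zero := by simp [sbarPoly, sbarCoeff_zero]
  one := by simp [sbarPoly, sbarCoeff_zero]
  add_two n := by
    rw [X_mul_sbarPoly_succ, sbarPoly, sbarPoly, show (n + 2) / 2 + 1 = n / 2 + 1 + 1 by lia,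
      sum_range_succ', sum_range_succ' _ (n / 2 + 1), sbarCoeff_zero, sbarCoeff_zero, smul_sum,
      add_right_comm, ← sum_add_distrib]
    congr 1
    refine sum_congr rfl fun k hk => ?_
    rw [sbarCoeff_add_two_succ hpr (mem_range_succ_iff.mp hk),
      show n + 2 - 2 * (k + 1) = n - 2 * k by lia, smul_eq_C_mul, C_add, C_mul]
    ring

lemma prod_mul_prod_inv_eq_prod_reflect {K : Type*} [Field K] {f : ℕ → K} (hf : ∀ i, f i ≠ 0)
    {n k : ℕ} (hk : k ≤ n) :
    (∏ i ∈ range n, f i) * ∏ i ∈ range (n - k), (f i)⁻¹ = ∏ i ∈ range k, f (n - 1 - i) := by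
  obtain ⟨m, rfl⟩ := Nat.exists_eq_add_of_le' hk
  rw [Nat.add_sub_cancel, prod_range_add, prod_inv_distrib, mul_right_comm,
    mul_inv_cancel₀ (prod_ne_zero_iff.mpr fun i _ => hf i), one_mul, ← prod_range_reflect]
  refine prod_congr rfl fun i hi => congrArg f ?_
  have := mem_range.mp hi
  lia

/-- The `i`-th factor of the normalization constant relating `Sbar` to `S`. -/
noncomputable def sbarFactor (p q r s : ℝ) (n i : ℕ) : ℝ :=
  ((2 * (i : ℝ) + (-1) ^ (n + 1) + 2) * q + s) /
    ((2 * (i : ℝ) + (-1) ^ (n + 1) + 2 * (n / 2 : ℕ)) * p + r)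

lemma sbarFactor_ne_zero (hqs : ∀ i : ℕ, (2 * (i : ℝ) + 1) * q + s ≠ 0)
    (hpr : ∀ i : ℕ, (2 * (i : ℝ) - 1) * p + r ≠ 0) (n i : ℕ) : sbarFactor p q r s n i ≠ 0 := by
  obtain ⟨j, hj⟩ : ∃ j : ℕ, (-1 : ℝ) ^ (n + 1) = 2 * j - 1 := by
    rcases neg_one_pow_eq_or ℝ (n + 1) with h | h
    exacts [⟨1, by rw [h]; norm_num⟩, ⟨0, by rw [h]; norm_num⟩]
  rw [sbarFactor, hj]
  refine div_ne_zero ?_ ?_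
  · convert hqs (i + j) using 3
    push_cast
    ring
  · convert hpr (i + n / 2 + j) using 3
    push_cast
    ring

lemma sbarCoeff_eq_choose_mul_prod (p q r s : ℝ) {n k : ℕ} (hk : k ≤ n / 2) :
    sbarCoeff p q r s n k =
      (n / 2).choose k * ∏ i ∈ range k, sbarFactor p q r s n (n / 2 - 1 - i) := by
  rw [sbarCoeff, sbarCoeffNum, mul_div_assoc, stepProd, stepProd, ← prod_div_distrib]
  refine congrArg _ (prod_congr rfl fun i hi => ?_)
  have hi : i + 1 ≤ n / 2 := (Nat.succ_le_of_lt (mem_range.mp hi)).trans hk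
  rw [sbarFactor, Nat.sub_sub, add_comm 1 i, Nat.cast_sub hi, Nat.cast_succ]
  congr 3
  · ring
  · linear_combination -two_mul_div_two_add_neg_one_pow n

theorem Sbar_eq_eval_sbarPoly (hqs : ∀ i : ℕ, (2 * (i : ℝ) + 1) * q + s ≠ 0)
    (hpr : ∀ i : ℕ, (2 * (i : ℝ) - 1) * p + r ≠ 0) (n : ℕ) (x : ℝ) :
    Sbar p q r s n x = (sbarPoly p q r s n).eval x := by
  rw [Sbar, S, sbarPoly, eval_finsetSum, mul_sum]
  refine sum_congr rfl fun k hk => ?_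
  have hkn : k ≤ n / 2 := mem_range_succ_iff.mp hk
  rw [eval_C_mul, eval_X_pow, sbarCoeff_eq_choose_mul_prod _ _ _ _ hkn,
    ← prod_mul_prod_inv_eq_prod_reflect (sbarFactor_ne_zero hqs hpr n) hkn, mul_left_comm,
    ← mul_assoc]
  simp only [sbarFactor, inv_div, mul_assoc, mul_left_comm]

end SbarPoly

section MomentFunctional

variable {p q r s : ℝ} {L : ℝ[X] →ₗ[ℝ] ℝ}

/-- The moment functionals for which the polynomials `sbarPoly p q r s` are orthogonal: the odd
moments vanish and consecutive even moments have the prescribed ratio, written without division. -/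
structure IsSMomentFunctional (p q r s : ℝ) (L : ℝ[X] →ₗ[ℝ] ℝ) : Prop where
  odd (k : ℕ) : L (X ^ (2 * k + 1)) = 0
  even (k : ℕ) : ((2 * k + 1) * p + r) * L (X ^ (2 * (k + 1))) =
    -(((2 * k + 1) * q + s) * L (X ^ (2 * k)))

namespace IsSMomentFunctional

lemma stepProd_mul_map (hL : IsSMomentFunctional p q r s L) (j k : ℕ) :
    stepProd q s (2 * (j + k) - 1) k * L (X ^ (2 * j)) =
      (-1) ^ k * stepProd p r (2 * (j + k) - 1) k * L (X ^ (2 * (j + k))) := by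
  induction k generalizing j with
  | zero => simp
  | succ k ih =>
    have ih := ih (j + 1)
    have hstep := hL.even j
    push_cast at ih ⊢
    rw [show (j : ℝ) + 1 + k = j + (k + 1) by ring, show j + 1 + k = j + (k + 1) by ring] at ih
    rw [stepProd_succ, stepProd_succ, show 2 * ((j : ℝ) + (k + 1)) - 1 - 2 * k = 2 * j + 1 by ring]
    linear_combination stepProd q s (2 * (j + (k + 1)) - 1) k * hstep - ((2 * j + 1) * p + r) * ih

lemma map_sbarPoly_odd (hL : IsSMomentFunctional p q r s L) (N : ℕ) :
    L (sbarPoly p q r s (2 * N + 1)) = 0 := by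
  rw [sbarPoly, map_sum]
  refine sum_eq_zero fun k hk => ?_
  have hkN : 2 * N + 1 - 2 * k = 2 * (N - k) + 1 := by have := mem_range.mp hk; lia
  rw [← smul_eq_C_mul, map_smul, hkN, hL.odd, smul_zero]

lemma sbarCoeff_mul_map_X_pow (hL : IsSMomentFunctional p q r s L)
    (hpr : ∀ i : ℕ, (2 * (i : ℝ) - 1) * p + r ≠ 0) {N k : ℕ} (hk : k ≤ N + 1) :
    sbarCoeff p q r s (2 * (N + 1)) k * L (X ^ (2 * (N + 1) - 2 * k)) =
      (-1) ^ k * ((N + 1).choose k : ℝ) * stepProd p r (2 * (2 * N + 1 : ℕ) - 1 - 2 * k) N *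
        (L (X ^ (2 * (N + 1))) / stepProd p r (2 * (2 * N + 1 : ℕ) - 1) N) := by
  obtain ⟨j, hj⟩ := Nat.exists_eq_add_of_le' hk
  have hmap := hL.stepProd_mul_map j k
  have hcomm := stepProd_mul_comm p r (2 * (2 * N + 1 : ℕ) - 1) N k
  have hk₀ := stepProd_ne_zero hpr (show k ≤ 2 * N + 1 + 1 by lia)
  have hN₀ := stepProd_ne_zero hpr (show N ≤ 2 * N + 1 + 1 by lia)
  rw [show 2 * (N + 1) - 2 * k = 2 * j by lia, sbarCoeff, sbarCoeffNum_even,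
    show 2 * ((2 * (N + 1) : ℕ) : ℝ) - 3 = 2 * (2 * N + 1 : ℕ) - 1 by push_cast; ring,
    ← mul_div_assoc, div_mul_eq_mul_div, div_eq_div_iff hk₀ hN₀]
  rw [← hj, ← Nat.cast_add, ← hj] at hmap
  rw [show 2 * ((2 * N + 1 : ℕ) : ℝ) - 1 - 2 * N = 2 * (N + 1 : ℕ) - 1 by push_cast; ring] at hcomm
  linear_combination ((N + 1).choose k * stepProd p r (2 * (2 * N + 1 : ℕ) - 1) N : ℝ) * hmap +
    ((-1) ^ k * (N + 1).choose k * L (X ^ (2 * (N + 1))) : ℝ) * hcomm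

lemma map_sbarPoly_even (hL : IsSMomentFunctional p q r s L)
    (hpr : ∀ i : ℕ, (2 * (i : ℝ) - 1) * p + r ≠ 0) (N : ℕ) :
    L (sbarPoly p q r s (2 * (N + 1))) = 0 := by
  rw [sbarPoly, show 2 * (N + 1) / 2 + 1 = N + 2 by lia, map_sum]
  simp only [← smul_eq_C_mul, map_smul, smul_eq_mul]
  rw [sum_congr rfl fun k hk => hL.sbarCoeff_mul_map_X_pow hpr (mem_range_succ_iff.mp hk),
    ← sum_mul, sum_neg_one_pow_mul_choose_mul_stepProd, zero_mul]

lemma map_sbarPoly_succ (hL : IsSMomentFunctional p q r s L)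
    (hpr : ∀ i : ℕ, (2 * (i : ℝ) - 1) * p + r ≠ 0) (n : ℕ) :
    L (sbarPoly p q r s (n + 1)) = 0 := by
  rcases n.even_or_odd' with ⟨N, rfl | rfl⟩
  · exact hL.map_sbarPoly_odd N
  · exact hL.map_sbarPoly_even hpr N

theorem map_sbarPoly_mul (hL : IsSMomentFunctional p q r s L)
    (hpr : ∀ i : ℕ, (2 * (i : ℝ) - 1) * p + r ≠ 0) (n m : ℕ) :
    L (sbarPoly p q r s n * sbarPoly p q r s m) =
      (if n = m then 1 else 0) * (-1) ^ n * (∏ i ∈ range n, recurrenceCoeff p q r s i) * L 1 := by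
  rw [(isSymmThreeTerm_sbarPoly hpr).map_mul_eq_ite (hL.map_sbarPoly_succ hpr)]
  split_ifs <;> simp

end IsSMomentFunctional

end MomentFunctional

section Weight

open ProbabilityTheory

/-- The linear functional `P ↦ ∫ x in α..β, w x * P x` on polynomials. -/
noncomputable def integralFunctional {w : ℝ → ℝ} {α β : ℝ} (hw : IntervalIntegrable w volume α β) :
    ℝ[X] →ₗ[ℝ] ℝ where
  toFun P := ∫ x in α..β, w x * P.eval x
  map_add' P Q := by
    simp only [eval_add, mul_add]
    exact intervalIntegral.integral_add (hw.mul_continuousOn P.continuousOn)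
      (hw.mul_continuousOn Q.continuousOn)
  map_smul' c P := by
    simp only [eval_smul, smul_eq_mul, mul_left_comm _ c, intervalIntegral.integral_const_mul,
      RingHom.id_apply]

lemma integralFunctional_apply {w : ℝ → ℝ} {α β : ℝ} (hw : IntervalIntegrable w volume α β)
    (P : ℝ[X]) : integralFunctional hw P = ∫ x in α..β, w x * P.eval x := rfl

lemma intervalIntegral_eq_zero_of_odd {E : Type*} [NormedAddCommGroup E] [NormedSpace ℝ E]
    {f : ℝ → E} (hf : f.Odd) (c : ℝ) : ∫ x in (-c)..c, f x = 0 := by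
  have h := intervalIntegral.integral_comp_neg (a := -c) (b := c) f
  simp only [hf _, intervalIntegral.integral_neg, neg_neg] at h
  refine (smul_eq_zero_iff_right (two_ne_zero' ℝ)).mp ?_
  rw [two_smul, ← neg_eq_iff_add_eq_zero, h]

lemma integral_betaPDFReal {α β : ℝ} (hα : 0 < α) (hβ : 0 < β) :
    ∫ x, betaPDFReal α β x = 1 := by
  have hnonneg (x : ℝ) : 0 ≤ betaPDFReal α β x := by
    by_cases hx : 0 < x ∧ x < 1
    · exact (betaPDFReal_pos hx.1 hx.2 hα hβ).le
    · rw [betaPDFReal, if_neg hx]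
  rw [integral_eq_lintegral_of_nonneg_ae (.of_forall hnonneg)
    (stronglyMeasurable_betaPDFReal α β).aestronglyMeasurable]
  exact (congrArg ENNReal.toReal (lintegral_betaPDF_eq_one hα hβ)).trans ENNReal.toReal_one

lemma integral_abs_mul_comp_sq (g : ℝ → ℝ) : ∫ x, |x| * g (x ^ 2) = ∫ y in Set.Ioi 0, g y := by
  have habs := integral_comp_abs (f := fun y => y * g (y ^ 2))
  simp only [sq_abs] at habs
  rw [habs, ← integral_comp_rpow_Ioi_of_pos (g := g) two_pos, ← integral_const_mul]
  refine setIntegral_congr_fun measurableSet_Ioi fun y _ => ?_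
  norm_num [mul_assoc]

lemma beta_add_one {α β : ℝ} (hα : 0 < α) (hβ : 0 < β) :
    (α + β) * beta (α + 1) β = α * beta α β := by
  have hΓ := (Gamma_pos_of_pos (add_pos hα hβ)).ne'
  have hαβ := (add_pos hα hβ).ne'
  rw [beta, beta, add_right_comm, Gamma_add_one hα.ne', Gamma_add_one hαβ]
  field_simp

/-- The weight of the generalized ultraspherical polynomials on `[-1, 1]`. -/
noncomputable def gupWeight (a b x : ℝ) : ℝ := |x| ^ (2 * a) * (1 - x ^ 2) ^ b

variable {a b : ℝ}

lemma indicator_gupWeight (ha : -(1 / 2) < a) (hb : -1 < b) {x : ℝ} (hx : x ≠ 0) :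
    (Set.Ioo (-1) 1).indicator (gupWeight a b) x =
      beta (a + 1 / 2) (b + 1) * (|x| * betaPDFReal (a + 1 / 2) (b + 1) (x ^ 2)) := by
  have hmem : x ∈ Set.Ioo (-1) 1 ↔ 0 < x ^ 2 ∧ x ^ 2 < 1 := by
    rw [sq_lt_one_iff_abs_lt_one, abs_lt, Set.mem_Ioo, and_iff_right (sq_pos_of_ne_zero hx)]
  have hbeta : beta (a + 1 / 2) (b + 1) ≠ 0 := (beta_pos (by linarith) (by linarith)).ne'
  have hpow : |x| * (x ^ 2) ^ (a + 1 / 2 - 1) = |x| ^ (2 * a) := by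
    rw [← sq_abs, ← rpow_natCast_mul (abs_nonneg x), mul_comm, ← rpow_add_one (abs_ne_zero.mpr hx)]
    congr 1
    push_cast
    ring
  rw [betaPDFReal, Set.indicator_apply]
  simp only [hmem]
  split_ifs
  · rw [gupWeight, ← hpow, add_sub_cancel_right]
    linear_combination (-|x| * (x ^ 2) ^ (a + 1 / 2 - 1) * (1 - x ^ 2) ^ b) *
      mul_one_div_cancel hbeta
  · rw [mul_zero, mul_zero]

theorem integral_gupWeight (ha : -(1 / 2) < a) (hb : -1 < b) :
    ∫ x in (-1)..1, gupWeight a b x = beta (a + 1 / 2) (b + 1) := by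
  have hα : 0 < a + 1 / 2 := by linarith
  have hβ : 0 < b + 1 := by linarith
  have hsupp : ∫ y in Set.Ioi 0, betaPDFReal (a + 1 / 2) (b + 1) y =
      ∫ y, betaPDFReal (a + 1 / 2) (b + 1) y :=
    setIntegral_eq_integral_of_forall_compl_eq_zero fun y hy => if_neg fun h => hy h.1
  calc
    ∫ x in (-1)..1, gupWeight a b x
      = ∫ x, (Set.Ioo (-1) 1).indicator (gupWeight a b) x := by
        rw [intervalIntegral.integral_of_le (by norm_num), integral_Ioc_eq_integral_Ioo,
          integral_indicator measurableSet_Ioo]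
    _ = ∫ x, beta (a + 1 / 2) (b + 1) *
          (|x| * betaPDFReal (a + 1 / 2) (b + 1) (x ^ 2)) := by
        refine integral_congr_ae ?_
        filter_upwards [volume.ae_ne 0] with x hx
        exact indicator_gupWeight ha hb hx
    _ = beta (a + 1 / 2) (b + 1) := by
        rw [integral_const_mul, integral_abs_mul_comp_sq, hsupp, integral_betaPDFReal hα hβ,
          mul_one]

lemma intervalIntegrable_gupWeight (ha : -(1 / 2) < a) (hb : -1 < b) :
    IntervalIntegrable (gupWeight a b) volume (-1) 1 := by
  -- A non-integrable weight would have integral `0`, so the value of the integral suffices.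
  refine intervalIntegral.intervalIntegrable_of_integral_ne_zero ?_
  rw [integral_gupWeight ha hb]
  exact (beta_pos (by linarith) (by linarith)).ne'

lemma integral_gupWeight_mul_pow (ha : -(1 / 2) < a) (hb : -1 < b) (k : ℕ) :
    ∫ x in (-1)..1, gupWeight a b x * x ^ (2 * k) = beta (a + 1 / 2 + k) (b + 1) := by
  have hk : -(1 / 2) < a + k := lt_add_of_lt_of_nonneg ha k.cast_nonneg
  rw [add_right_comm, ← integral_gupWeight hk hb]
  refine intervalIntegral.integral_congr_ae ?_
  filter_upwards [volume.ae_ne 0] with x hx _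
  rw [gupWeight, gupWeight, mul_add, ← (even_two_mul k).pow_abs,
    show 2 * a + 2 * (k : ℝ) = 2 * a + (2 * k : ℕ) by push_cast; rfl,
    rpow_add_natCast (abs_ne_zero.mpr hx), mul_right_comm]

theorem isSMomentFunctional_gup (ha : -(1 / 2) < a) (hb : -1 < b) :
    IsSMomentFunctional (-1) 1 (-2 * a - 2 * b - 2) (2 * a)
      (integralFunctional (intervalIntegrable_gupWeight ha hb)) where
  odd k := by
    rw [integralFunctional_apply]
    refine intervalIntegral_eq_zero_of_odd (fun x => ?_) 1
    simp only [gupWeight, abs_neg, neg_sq, eval_pow, eval_X, (odd_two_mul_add_one k).neg_pow,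
      mul_neg]
  even k := by
    have hbeta := beta_add_one (α := a + 1 / 2 + k) (β := b + 1)
      (by linarith [k.cast_nonneg (α := ℝ)]) (by linarith)
    simp only [integralFunctional_apply, eval_pow, eval_X, integral_gupWeight_mul_pow ha hb]
    push_cast
    rw [← add_assoc]
    linear_combination -2 * hbeta

lemma recurrenceCoeff_gup (a b : ℝ) (i : ℕ) :
    recurrenceCoeff (-1) 1 (-2 * a - 2 * b - 2) (2 * a) i =
      -((((i : ℝ) + 1) + (1 - (-1 : ℝ) ^ (i + 1)) * a)
          * (((i : ℝ) + 1) + (1 - (-1 : ℝ) ^ (i + 1)) * a + 2 * b)) /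
        ((2 * ((i : ℝ) + 1) + 2 * a + 2 * b - 1) * (2 * ((i : ℝ) + 1) + 2 * a + 2 * b + 1)) := by
  rw [recurrenceCoeff, recurrenceNum]
  split_ifs with hi
  · rw [hi.add_one.neg_one_pow]
    congr 1 <;> ring
  · rw [(Nat.not_even_iff_odd.mp hi).add_one.neg_one_pow]
    congr 1 <;> ring

theorem GUP_orthogonality_general (a b : ℝ) (ha : -(1 / 2 : ℝ) < a) (hb : -1 < b)
    (hab : a + b ≠ -(1 / 2)) (n m : ℕ) :
    ∫ x in (-1 : ℝ)..1,
        |x| ^ (2 * a) * (1 - x ^ 2) ^ b *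
          Sbar (-1) 1 (-2 * a - 2 * b - 2) (2 * a) n x *
          Sbar (-1) 1 (-2 * a - 2 * b - 2) (2 * a) m x =
      (if n = m then (1 : ℝ) else 0) * (-1 : ℝ) ^ n *
        (∏ i ∈ Finset.range n,
          -((((i : ℝ) + 1) + (1 - (-1 : ℝ) ^ (i + 1)) * a)
              * (((i : ℝ) + 1) + (1 - (-1 : ℝ) ^ (i + 1)) * a + 2 * b)) /
            ((2 * ((i : ℝ) + 1) + 2 * a + 2 * b - 1)
              * (2 * ((i : ℝ) + 1) + 2 * a + 2 * b + 1))) *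
        (Real.Gamma (a + 1 / 2) * Real.Gamma (b + 1) / Real.Gamma (a + b + 3 / 2)) := by
  have hqs (i : ℕ) : (2 * (i : ℝ) + 1) * 1 + 2 * a ≠ 0 := by
    linarith [i.cast_nonneg (α := ℝ)]
  have hpr (i : ℕ) : (2 * (i : ℝ) - 1) * -1 + (-2 * a - 2 * b - 2) ≠ 0 := by
    rcases i with _ | i
    · contrapose! hab
      push_cast at hab
      linarith
    · push_cast
      linarith [i.cast_nonneg (α := ℝ)]
  have key := (isSMomentFunctional_gup ha hb).map_sbarPoly_mul hpr n m
  simp only [integralFunctional_apply, eval_mul, eval_one, mul_one, integral_gupWeight ha hb,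
    recurrenceCoeff_gup, ← Sbar_eq_eval_sbarPoly hqs hpr] at key
  rw [beta, show a + 1 / 2 + (b + 1) = a + b + 3 / 2 by ring] at key
  simpa only [gupWeight, mul_assoc] using key

end Weight

/-- Orthogonality relation of the monic generalized ultraspherical polynomials
`S̄_n(−1,1,−2a−2b−2,2a;·)` with respect to the weight `|x|^{2a}(1−x²)^b` on `[−1,1]`. -/
theorem GUP_orthogonality (a b : ℝ) (ha : -(1 / 2 : ℝ) < a) (hb : -1 < b) (n m : ℕ)
    (hden : ∀ j : ℤ, Odd j → 1 ≤ |j| → |j| ≤ 2 * (max n m : ℤ) + 1 →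
      2 * (a + b) + (j : ℝ) ≠ 0) :
    ∫ x in (-1 : ℝ)..1,
        |x| ^ (2 * a) * (1 - x ^ 2) ^ b *
          Sbar (-1) 1 (-2 * a - 2 * b - 2) (2 * a) n x *
          Sbar (-1) 1 (-2 * a - 2 * b - 2) (2 * a) m x =
      (if n = m then (1 : ℝ) else 0) * (-1 : ℝ) ^ n *
        (∏ i ∈ Finset.range n,
          -((((i : ℝ) + 1) + (1 - (-1 : ℝ) ^ (i + 1)) * a)
              * (((i : ℝ) + 1) + (1 - (-1 : ℝ) ^ (i + 1)) * a + 2 * b)) /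
            ((2 * ((i : ℝ) + 1) + 2 * a + 2 * b - 1)
              * (2 * ((i : ℝ) + 1) + 2 * a + 2 * b + 1))) *
        (Real.Gamma (a + 1 / 2) * Real.Gamma (b + 1) / Real.Gamma (a + b + 3 / 2)) := by
  refine GUP_orthogonality_general a b ha hb (fun hab => ?_) n m
  exact hden 1 odd_one (by simp) (by simp) (by push_cast; linarith)
end

section
/- For every natural number n ≥ 1 and every real x, the monic Chebyshev polynomial of the sixth kind of degree 2n factors as S̄_{2n}(−1, 1, −5, 2; x) = ∏_{k=1, k≠n+1}^{2n+1} ( x − cos(kπ/(2n+2)) ), the product running over k = 1, …, 2n+1 with k = n+1 omitted. -/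
open Finset Real MeasureTheory

/-!
Multiplying the even polynomial `S̄_{2n}` by `x` turns it into `2^{-(2n+1)} U_{2n+1}`, where `U` is
the Chebyshev polynomial of the second kind: once the products in the monic normalization have
cancelled, the coefficients agree with those of
`U_m = ∑ k, (-1)^k * choose (m - k) k * (2 * X)^(m - 2 * k)`. The roots of `U_{2n+1}` are the
numbers `cos (k * π / (2 * n + 2))`, and the middle one, `k = n + 1`, is the root `0` contributed by
the factor `x`; both sides being continuous, this factor cancels at `x = 0` as well.
-/

section ChebyshevU

open Polynomial

theorem chebyshevU_eq_sum_antidiagonal (R : Type*) [CommRing R] (n : ℕ) :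
    Chebyshev.U R n =
      ∑ p ∈ antidiagonal n, (-1) ^ p.1 * (p.2.choose p.1 : R[X]) * (2 * X) ^ (p.2 - p.1) := by
  induction n using Nat.twoStepInduction with
  | zero => simp
  | one => simp [Finset.Nat.antidiagonal_succ]
  | more n ih₀ ih₁ =>
    have pascal (p : ℕ × ℕ) :
        (-1) ^ (p.1 + 1) * ((p.2 + 1).choose (p.1 + 1) : R[X]) *
            (2 * X) ^ (p.2 + 1 - (p.1 + 1)) =
          2 * X * ((-1) ^ (p.1 + 1) * (p.2.choose (p.1 + 1) : R[X]) *
            (2 * X) ^ (p.2 - (p.1 + 1))) -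
          (-1) ^ p.1 * (p.2.choose p.1 : R[X]) * (2 * X) ^ (p.2 - p.1) := by
      rw [Nat.add_sub_add_right, Nat.choose_succ_succ, Nat.cast_add]
      rcases lt_or_ge p.1 p.2 with h | h
      · obtain ⟨d, hd⟩ := Nat.exists_eq_add_of_lt h
        rw [show p.2 - p.1 = d + 1 by omega, show p.2 - (p.1 + 1) = d by omega]
        ring
      · rw [Nat.choose_eq_zero_of_lt (Nat.lt_succ_of_le h)]
        ring
    have recurrence := Chebyshev.U_add_two R n
    push_cast at ih₁ ⊢
    rw [recurrence, ih₀, ih₁, Finset.Nat.sum_antidiagonal_succ (n := n + 1),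
      Finset.Nat.sum_antidiagonal_succ (n := n), Finset.Nat.sum_antidiagonal_succ' (n := n)]
    simp only [pascal, mul_add, mul_sum, sum_sub_distrib, Nat.choose_zero_right,
      Nat.choose_zero_succ, Nat.sub_zero, Nat.cast_zero]
    ring

theorem chebyshevU_eq_sum_range (R : Type*) [CommRing R] (n : ℕ) :
    Chebyshev.U R n = ∑ k ∈ range (n / 2 + 1),
      (-1) ^ k * ((n - k).choose k : R[X]) * (2 * X) ^ (n - 2 * k) := by
  rw [chebyshevU_eq_sum_antidiagonal, Finset.Nat.sum_antidiagonal_eq_sum_range_succ_mk]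
  simp only [Nat.sub_sub, ← two_mul]
  refine (sum_subset (range_subset_range.mpr (by omega)) fun k _ hk ↦ ?_).symm
  rw [mem_range] at hk
  rw [Nat.choose_eq_zero_of_lt (by omega)]
  ring

theorem chebyshevU_real_eq_prod (n : ℕ) :
    Chebyshev.U ℝ n = C (2 ^ n) * ∏ k ∈ Icc 1 n, (X - C (cos (k * π / (n + 1)))) := by
  have roots_eq : (Chebyshev.U ℝ n).roots =
      (Multiset.range n).map (fun k : ℕ ↦ cos ((k + 1) * π / (n + 1))) := by
    rw [Chebyshev.roots_U_real, image_val, range_val, (Chebyshev.roots_U_real_nodup n).dedup]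
  have factorization := C_leadingCoeff_mul_prod_multiset_X_sub_C (p := Chebyshev.U ℝ n)
    (by rw [roots_eq, Chebyshev.natDegree_U_natCast, Multiset.card_map, Multiset.card_range])
  rw [← factorization, Chebyshev.leadingCoeff_U_natCast, roots_eq, Multiset.map_map,
    ← Finset.Ico_add_one_right_eq_Icc, prod_Ico_eq_prod_range, Nat.add_sub_cancel,
    ← range_val, prod_map_val]
  simp only [Function.comp_apply, Nat.cast_add, Nat.cast_one, add_comm]

theorem eval_chebyshevU_two_mul_add_one_eq_prod (n : ℕ) (x : ℝ) :
    (Chebyshev.U ℝ (2 * n + 1 : ℕ)).eval x = 2 ^ (2 * n + 1) *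
      (x * ∏ k ∈ (Icc 1 (2 * n + 1)).erase (n + 1), (x - cos (k * π / (2 * n + 2)))) := by
  have middle_mem : n + 1 ∈ Icc 1 (2 * n + 1) := mem_Icc.mpr ⟨by omega, by omega⟩
  have cos_middle : cos ((n + 1 : ℕ) * π / (2 * n + 2)) = 0 := by
    rw [← cos_pi_div_two]
    congr 1
    push_cast
    field_simp
  have denom : ((2 * n + 1 : ℕ) : ℝ) + 1 = 2 * n + 2 := by push_cast; ring
  simp only [chebyshevU_real_eq_prod, eval_mul, eval_C, eval_prod, eval_sub, eval_X, denom]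
  rw [← mul_prod_erase _ _ middle_mem, cos_middle, sub_zero]

end ChebyshevU

theorem choose_succ_mul_succ_mul_succ (m k : ℕ) :
    m.choose (k + 1) * (k + 1) * (m + 1) = (m + 1).choose k * (m + 1 - k) * (m - k) := by
  rw [Nat.choose_succ_right_eq, mul_right_comm, Nat.choose_mul_succ_eq]

theorem four_pow_mul_choose_mul_prod_Ico {K : Type*} [Field K] [CharZero K] {n k : ℕ}
    (hk : k ≤ n) :
    (4 : K) ^ k * (n.choose k * ∏ i ∈ Ico (n - k) n, (2 * i + 3 : K) / -(2 * i + 2 * n + 4)) =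
      (-1) ^ k * (2 * n + 1 - k).choose k := by
  induction k with
  | zero => simp
  | succ k ih =>
    obtain ⟨d, rfl⟩ := Nat.exists_eq_add_of_le hk
    have ih := ih (by omega)
    have choose_step := congrArg (Nat.cast (R := K)) (Nat.choose_succ_right_eq (k + 1 + d) k)
    have choose_step' := congrArg (Nat.cast (R := K))
      (choose_succ_mul_succ_mul_succ (k + 2 * d + 2) k)
    rw [show k + 1 + d - k = d + 1 by omega] at choose_step
    rw [show k + 2 * d + 2 + 1 - k = 2 * d + 3 by omega,
      show k + 2 * d + 2 - k = 2 * d + 2 by omega] at choose_step'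
    rw [show k + 1 + d - k = d + 1 by omega,
      show 2 * (k + 1 + d) + 1 - k = k + 2 * d + 2 + 1 by omega] at ih
    rw [Nat.add_sub_cancel_left, prod_eq_prod_Ico_succ_bot (by omega),
      show 2 * (k + 1 + d) + 1 - (k + 1) = k + 2 * d + 2 by omega]
    set P := ∏ i ∈ Ico (d + 1) (k + 1 + d), (2 * i + 3 : K) / -(2 * i + 2 * (k + 1 + d : ℕ) + 4)
    push_cast at choose_step choose_step' ⊢
    set Q : K := (2 * d + 3) / -(2 * d + 2 * (k + 1 + d) + 4) with hQ
    have hk₀ : (k : K) + 1 ≠ 0 := by norm_cast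
    have hd₀ : (k : K) + 2 * d + 2 + 1 ≠ 0 := by norm_cast
    have last_factor : Q * (2 * (k + 2 * d + 2 + 1)) = -(2 * d + 3) := by
      rw [hQ, show 2 * (d : K) + 2 * (k + 1 + d) + 4 = 2 * (k + 2 * d + 2 + 1) by ring, div_neg,
        neg_mul, div_mul_cancel₀ _ (mul_ne_zero two_ne_zero hd₀)]
    refine mul_right_cancel₀ (mul_ne_zero hk₀ hd₀) ?_
    linear_combination 4 * 4 ^ k * Q * P * (k + 2 * d + 2 + 1) * choose_step
      + 2 * 4 ^ k * (k + 1 + d).choose k * P * (d + 1) * last_factor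
      - (2 * d + 2) * (2 * d + 3) * ih + (-1) ^ k * choose_step'

theorem Sbar_eq_sum {p q r s : ℝ} {n : ℕ}
    (hp : ∀ i < n / 2, (2 * (i : ℝ) + (-1) ^ (n + 1) + 2 * (n / 2 : ℕ)) * p + r ≠ 0)
    (hq : ∀ i < n / 2, (2 * (i : ℝ) + (-1) ^ (n + 1) + 2) * q + s ≠ 0) (x : ℝ) :
    Sbar p q r s n x = ∑ k ∈ range (n / 2 + 1), (n / 2).choose k *
      (∏ i ∈ Ico (n / 2 - k) (n / 2), ((2 * (i : ℝ) + (-1) ^ (n + 1) + 2) * q + s) /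
        ((2 * (i : ℝ) + (-1) ^ (n + 1) + 2 * (n / 2 : ℕ)) * p + r)) * x ^ (n - 2 * k) := by
  rw [Sbar, S, mul_sum]
  refine sum_congr rfl fun k _ ↦ ?_
  rw [← prod_range_mul_prod_Ico _ (Nat.sub_le (n / 2) k)]
  have cancel : ∏ i ∈ range (n / 2 - k),
      (((2 * (i : ℝ) + (-1) ^ (n + 1) + 2) * q + s) /
        ((2 * (i : ℝ) + (-1) ^ (n + 1) + 2 * (n / 2 : ℕ)) * p + r) *
      (((2 * (i : ℝ) + (-1) ^ (n + 1) + 2 * (n / 2 : ℕ)) * p + r) /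
        ((2 * (i : ℝ) + (-1) ^ (n + 1) + 2) * q + s))) = 1 := by
    refine prod_eq_one fun i hi ↦ ?_
    have hi : i < n / 2 := (mem_range.mp hi).trans_le (Nat.sub_le _ _)
    rw [div_mul_div_cancel₀ (hp i hi), div_self (hq i hi)]
  rw [prod_mul_distrib] at cancel
  linear_combination (n / 2).choose k * x ^ (n - 2 * k) *
    (∏ i ∈ Ico (n / 2 - k) (n / 2), ((2 * (i : ℝ) + (-1) ^ (n + 1) + 2) * q + s) /
        ((2 * (i : ℝ) + (-1) ^ (n + 1) + 2 * (n / 2 : ℕ)) * p + r)) * cancel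

theorem continuous_Sbar (p q r s : ℝ) (n : ℕ) : Continuous (Sbar p q r s n) := by
  unfold Sbar S
  fun_prop

theorem Sbar_sixth_kind_two_mul_eq_sum (n : ℕ) (x : ℝ) :
    Sbar (-1) 1 (-5) 2 (2 * n) x = ∑ k ∈ range (n + 1), n.choose k *
      (∏ i ∈ Ico (n - k) n, (2 * i + 3 : ℝ) / -(2 * i + 2 * n + 4)) * x ^ (2 * (n - k)) := by
  have numer (i : ℕ) : (2 * (i : ℝ) + -1 + 2) * 1 + 2 = 2 * i + 3 := by ring
  have denom (i : ℕ) : (2 * (i : ℝ) + -1 + 2 * n) * -1 + -5 = -(2 * i + 2 * n + 4) := by ring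
  have half : 2 * n / 2 = n := by omega
  have sign : (-1 : ℝ) ^ (2 * n + 1) = -1 := (odd_two_mul_add_one n).neg_one_pow
  rw [Sbar_eq_sum]
  · simp only [half, sign, numer, denom, Nat.mul_sub]
  · intro i _
    rw [half, sign, denom]
    exact neg_ne_zero.mpr (by positivity)
  · intro i _
    rw [sign, numer]
    positivity

theorem eval_chebyshevU_two_mul_add_one_eq_Sbar (n : ℕ) (x : ℝ) :
    (Polynomial.Chebyshev.U ℝ (2 * n + 1 : ℕ)).eval x =
      2 ^ (2 * n + 1) * (x * Sbar (-1) 1 (-5) 2 (2 * n) x) := by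
  rw [Sbar_sixth_kind_two_mul_eq_sum, chebyshevU_eq_sum_range, Polynomial.eval_finsetSum,
    show (2 * n + 1) / 2 = n by omega, mul_sum, mul_sum]
  refine sum_congr rfl fun k hk ↦ ?_
  have hk : k ≤ n := mem_range_succ_iff.mp hk
  have coeff_eq := four_pow_mul_choose_mul_prod_Ico (K := ℝ) hk
  have four_pow_mul : (4 : ℝ) ^ k * 2 ^ (2 * (n - k) + 1) = 2 ^ (2 * n + 1) := by
    rw [show (4 : ℝ) = 2 ^ 2 by norm_num, ← pow_mul, ← pow_add]
    congr 1
    omega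
  simp only [Polynomial.eval_mul, Polynomial.eval_pow, Polynomial.eval_neg, Polynomial.eval_one,
    Polynomial.eval_natCast, Polynomial.eval_ofNat, Polynomial.eval_X]
  rw [← coeff_eq, ← four_pow_mul, show 2 * n + 1 - 2 * k = 2 * (n - k) + 1 by omega]
  ring

open Topology in
theorem eq_of_forall_self_mul_eq {M : Type*} [TopologicalSpace M] [T2Space M] [MulZeroClass M]
    [IsLeftCancelMulZero M] [∀ a : M, (𝓝[≠] a).NeBot] {f g : M → M}
    (hf : Continuous f) (hg : Continuous g) (h : ∀ x, x * f x = x * g x) : f = g :=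
  Continuous.ext_on (dense_compl_singleton 0) hf hg fun x hx ↦ mul_left_cancel₀ hx (h x)

/-- Factorization of the monic Chebyshev polynomials of the sixth kind of even degree:
`S̄_{2n}(−1,1,−5,2;x) = ∏_{k=1,k≠n+1}^{2n+1} (x − cos(kπ/(2n+2)))`. -/
theorem sixth_kind_chebyshev_factorization (n : ℕ) (hn : 1 ≤ n) (x : ℝ) :
    Sbar (-1) 1 (-5) 2 (2 * n) x =
      ∏ k ∈ (Finset.Icc 1 (2 * n + 1)).erase (n + 1),
        (x - Real.cos ((k : ℝ) * Real.pi / (2 * (n : ℝ) + 2))) := by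
  have Sbar_eq_prod : Sbar (-1) 1 (-5) 2 (2 * n) = fun y ↦
      ∏ k ∈ (Icc 1 (2 * n + 1)).erase (n + 1), (y - cos (k * π / (2 * n + 2))) := by
    refine eq_of_forall_self_mul_eq (continuous_Sbar _ _ _ _ _) (by fun_prop) fun y ↦ ?_
    exact mul_left_cancel₀ (pow_ne_zero (2 * n + 1) two_ne_zero)
      ((eval_chebyshevU_two_mul_add_one_eq_Sbar n y).symm.trans
        (eval_chebyshevU_two_mul_add_one_eq_prod n y))
  exact congrFun Sbar_eq_prod x
end
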